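/- (Krylov–Safonov C^α estimate) There exist constants α ∈ (0,1) and C > 0 depending only on n, λ, Λ such that: if a_{ij} : B₁ → ℝ are uniformly elliptic measurable coefficients and v ∈ C²(B₁) is bounded, nonnegative, and satisfies Σ_{i,j} a_{ij}(x) ∂_{ij} v(x) = 0 for all x ∈ B₁, then |v(x) − v(y)| ≤ C ‖v‖_{L^∞(B₁)} |x − y|^α for all x, y ∈ B_{1/2}. -/

import Mathlib

open MeasureTheory Metric Set Filter
open scoped ENNReal NNReal Topology

noncomputable section

/-- Euclidean space `ℝⁿ`. -/
abbrev En (n : ℕ) := EuclideanSpace ℝ (Fin n)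

/-- The second partial derivative `∂_{ij} v (x)`. -/
def pd2 {n : ℕ} (v : En n → ℝ) (i j : Fin n) (x : En n) : ℝ :=
  fderiv ℝ (fun y => fderiv ℝ v y (EuclideanSpace.single i 1)) x (EuclideanSpace.single j 1)

/-- Measurable, uniformly elliptic coefficients on `Ω`:
`λ|ξ|² ≤ Σ aᵢⱼ(x) ξᵢ ξⱼ ≤ Λ|ξ|²` for every `x ∈ Ω` and all `ξ`. -/
def UnifEllipticOn {n : ℕ} (Ω : Set (En n)) (lam Lam : ℝ)
    (a : Fin n → Fin n → En n → ℝ) : Prop :=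
  (∀ i j, Measurable (a i j)) ∧
    ∀ x ∈ Ω, ∀ ξ : En n,
      lam * ∑ i, ξ i ^ 2 ≤ ∑ i, ∑ j, a i j x * ξ i * ξ j ∧
      ∑ i, ∑ j, a i j x * ξ i * ξ j ≤ Lam * ∑ i, ξ i ^ 2


/-! ### Linear algebra -/

section KS

variable {n : ℕ}

/-- Elliptic matrices (not nec. symmetric) at a point. -/
def EllMat (lam Lam : ℝ) (A : Fin n → Fin n → ℝ) : Prop :=
  ∀ ξ : Fin n → ℝ, lam * ∑ i, ξ i ^ 2 ≤ ∑ i, ∑ j, A i j * ξ i * ξ j ∧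
      ∑ i, ∑ j, A i j * ξ i * ξ j ≤ Lam * ∑ i, ξ i ^ 2

/-- A symmetric nonnegative matrix is a sum of rank-one matrices. -/
lemma psd_decomp (P : Fin n → Fin n → ℝ) (hsym : ∀ i j, P i j = P j i)
    (hpos : ∀ ξ : Fin n → ℝ, 0 ≤ ∑ i, ∑ j, P i j * ξ i * ξ j) :
    ∃ (m : ℕ) (w : Fin m → Fin n → ℝ), ∀ i j, P i j = ∑ k, w k i * w k j := by
  have h : (Matrix.of P).PosSemidef := by
    refine Matrix.PosSemidef.of_dotProduct_mulVec_nonneg ?_ ?_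
    · ext i j
      simp [Matrix.conjTranspose, hsym i j]
    · intro x
      have := hpos x
      simp only [dotProduct, Matrix.mulVec, Matrix.of_apply, star_trivial, Finset.mul_sum]
      refine this.trans_eq ?_
      refine Finset.sum_congr rfl fun i _ => Finset.sum_congr rfl fun j _ => by ring
  obtain ⟨m, w, hw⟩ := Matrix.posSemidef_iff_eq_sum_vecMulVec.mp h
  refine ⟨m, w, fun i j => ?_⟩
  have := congrFun (congrFun hw i) j
  simp only [Matrix.of_apply] at this
  rw [this]
  simp [Matrix.sum_apply, Matrix.vecMulVec_apply]

lemma trace_ge {lam Lam : ℝ} {A : Fin n → Fin n → ℝ} (hA : EllMat lam Lam A)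
    (P : Fin n → Fin n → ℝ) (hsym : ∀ i j, P i j = P j i)
    (hpos : ∀ ξ : Fin n → ℝ, 0 ≤ ∑ i, ∑ j, P i j * ξ i * ξ j) :
    lam * ∑ i, P i i ≤ ∑ i, ∑ j, A i j * P i j := by
  obtain ⟨m, w, hw⟩ := psd_decomp P hsym hpos
  have h1 : ∑ i, ∑ j, A i j * P i j = ∑ k, ∑ i, ∑ j, A i j * w k i * w k j := by
    rw [Finset.sum_comm (s := (Finset.univ : Finset (Fin m)))]
    refine Finset.sum_congr rfl fun i _ => ?_
    rw [Finset.sum_comm (s := (Finset.univ : Finset (Fin m)))]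
    refine Finset.sum_congr rfl fun j _ => ?_
    rw [hw, Finset.mul_sum]
    exact Finset.sum_congr rfl fun k _ => by ring
  have h2 : lam * ∑ i, P i i = ∑ k, lam * ∑ i, w k i ^ 2 := by
    rw [← Finset.mul_sum, Finset.sum_comm]
    congr 1
    refine Finset.sum_congr rfl fun i _ => ?_
    rw [hw]
    exact Finset.sum_congr rfl fun k _ => by ring
  rw [h1, h2]
  exact Finset.sum_le_sum fun k _ => (hA (w k)).1

lemma entry_le_trace (P : Fin n → Fin n → ℝ) (hsym : ∀ i j, P i j = P j i)
    (hpos : ∀ ξ : Fin n → ℝ, 0 ≤ ∑ i, ∑ j, P i j * ξ i * ξ j) (i j : Fin n) :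
    |P i j| ≤ ∑ k, P k k := by
  obtain ⟨m, w, hw⟩ := psd_decomp P hsym hpos
  have hd : ∀ i, 0 ≤ P i i := fun i => by
    rw [hw]; exact Finset.sum_nonneg fun k _ => mul_self_nonneg _
  have hi : ∀ i, P i i ≤ ∑ k, P k k := fun i =>
    Finset.single_le_sum (f := fun k => P k k) (fun k _ => hd k) (Finset.mem_univ i)
  have : |P i j| ≤ (P i i + P j j) / 2 := by
    rw [hw i j, hw i i, hw j j, ← Finset.sum_add_distrib, Finset.sum_div]
    refine (Finset.abs_sum_le_sum_abs _ _).trans (Finset.sum_le_sum fun k _ => ?_)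
    rw [abs_le]
    constructor <;> nlinarith [sq_nonneg (w k i + w k j), sq_nonneg (w k i - w k j)]
  linarith [hi i, hi j]

lemma EllMat.diag_le {lam Lam : ℝ} {A : Fin n → Fin n → ℝ} (hA : EllMat lam Lam A) :
    ∑ i, A i i ≤ n * Lam := by
  have : ∀ i, A i i ≤ Lam := fun i => by
    have := (hA (Pi.single i 1)).2
    simpa [Pi.single_apply] using this
  calc ∑ i, A i i ≤ ∑ _i : Fin n, Lam := Finset.sum_le_sum fun i _ => this i
    _ = n * Lam := by simp

/-! ### Second order conditions -/

/-- The Hessian as a bilinear map. -/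
def Hs (u : En n → ℝ) (x : En n) : En n →L[ℝ] En n →L[ℝ] ℝ := fderiv ℝ (fderiv ℝ u) x

lemma fderiv_diffAt {u : En n → ℝ} {x : En n} (hu : ContDiffAt ℝ 2 u x) :
    DifferentiableAt ℝ (fderiv ℝ u) x :=
  (hu.fderiv_right (m := 1) (by norm_num)).differentiableAt (by norm_num)

lemma pd2_eq {u : En n → ℝ} {x : En n} (hu : ContDiffAt ℝ 2 u x) (i j : Fin n) :
    pd2 u i j x = Hs u x (EuclideanSpace.single j 1) (EuclideanSpace.single i 1) := by
  unfold pd2 Hs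
  rw [fderiv_clm_apply (fderiv_diffAt hu) (differentiableAt_const _)]
  simp

lemma pd2_symm {u : En n → ℝ} {x : En n} (hu : ContDiffAt ℝ 2 u x) (i j : Fin n) :
    pd2 u i j x = pd2 u j i x := by
  rw [pd2_eq hu, pd2_eq hu]
  exact (hu.isSymmSndFDerivAt (by simp)) _ _

lemma euclid_expand (ξ : En n) : ξ = ∑ i, ξ i • EuclideanSpace.single i (1 : ℝ) := by
  ext k
  simp [Finset.sum_apply, Pi.single_apply]

lemma Hs_eq {u : En n → ℝ} {x : En n} (hu : ContDiffAt ℝ 2 u x) (ξ : En n) :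
    Hs u x ξ ξ = ∑ i, ∑ j, pd2 u i j x * ξ i * ξ j := by
  conv_lhs => rw [euclid_expand ξ]
  simp only [map_sum, map_smul, _root_.sum_apply, _root_.smul_apply,
    smul_eq_mul, pd2_eq hu, Finset.mul_sum]
  refine Finset.sum_congr rfl fun i _ => Finset.sum_congr rfl fun j _ => by ring

lemma second_deriv_nonneg {f : ℝ → ℝ} {f' : ℝ → ℝ} {q : ℝ}
    (h1 : ∀ᶠ t in 𝓝 (0 : ℝ), HasDerivAt f (f' t) t) (h2 : HasDerivAt f' q 0)
    (hm : IsLocalMin f 0) : f' 0 = 0 ∧ 0 ≤ q := by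
  have hd : deriv f =ᶠ[𝓝 0] f' := h1.mono fun t ht => ht.deriv
  have h0 : f' 0 = 0 := hm.hasDerivAt_eq_zero h1.self_of_nhds
  refine ⟨h0, ?_⟩
  by_contra hq
  push Not at hq
  have hdd : deriv (deriv f) 0 = q := by rw [hd.deriv_eq]; exact h2.deriv
  have hmax := isLocalMax_of_deriv_deriv_neg (f := f) (x₀ := 0) (by rw [hdd]; exact hq)
    (by rw [h1.self_of_nhds.deriv, h0]) h1.self_of_nhds.continuousAt
  have hc : f =ᶠ[𝓝 0] fun _ => f 0 := by
    filter_upwards [hm, hmax] with t a b using le_antisymm b a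
  have hc' : deriv f =ᶠ[𝓝 0] fun _ => 0 := by
    filter_upwards [hc.eventuallyEq_nhds] with t ht
    rw [ht.deriv_eq]; simp
  have : deriv (deriv f) 0 = 0 := by rw [hc'.deriv_eq]; simp
  linarith

/-- Touching from below along lines. -/
lemma touch_line {u : En n → ℝ} {x : En n} (hu : ContDiffAt ℝ 2 u x) (ξ : En n)
    {φ φ' : ℝ → ℝ} {q : ℝ} (h1 : ∀ t, HasDerivAt φ (φ' t) t) (h2 : HasDerivAt φ' q 0)
    (hm : IsLocalMin (fun t : ℝ => u (x + t • ξ) - φ t) 0) :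
    fderiv ℝ u x ξ = φ' 0 ∧ q ≤ Hs u x ξ ξ := by
  have hl : ∀ t : ℝ, HasDerivAt (fun t : ℝ => x + t • ξ) ξ t := fun t => by
    simpa using ((hasDerivAt_id t).smul_const ξ).const_add x
  have hcont : Tendsto (fun t : ℝ => x + t • ξ) (𝓝 0) (𝓝 x) := by
    have := (hl 0).continuousAt.tendsto
    simpa using this
  have hev : ∀ᶠ y in 𝓝 x, ContDiffAt ℝ 2 u y := hu.eventually (by simp)
  have h1' : ∀ᶠ t in 𝓝 (0 : ℝ), HasDerivAt (fun t : ℝ => u (x + t • ξ) - φ t)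
      (fderiv ℝ u (x + t • ξ) ξ - φ' t) t := by
    filter_upwards [hcont.eventually hev] with t ht
    have hf := (ht.differentiableAt (by norm_num)).hasFDerivAt
    exact (hf.comp_hasDerivAt t (hl t)).sub (h1 t)
  have h2' : HasDerivAt (fun t : ℝ => fderiv ℝ u (x + t • ξ) ξ - φ' t) (Hs u x ξ ξ - q) 0 := by
    have hx0 : x = x + (0 : ℝ) • ξ := by simp
    have hf : HasFDerivAt (fderiv ℝ u) (Hs u x) x := (fderiv_diffAt hu).hasFDerivAt
    have hg : HasFDerivAt (fun y => fderiv ℝ u y ξ)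
        ((ContinuousLinearMap.apply ℝ ℝ ξ).comp (Hs u x)) x :=
      (ContinuousLinearMap.apply ℝ ℝ ξ).hasFDerivAt.comp x hf
    have := HasFDerivAt.comp_hasDerivAt_of_eq (0 : ℝ) hg (hl 0) hx0
    exact HasDerivAt.sub this h2
  obtain ⟨a, b⟩ := second_deriv_nonneg h1' h2' hm
  simp at a
  constructor <;> linarith

/-! ### Supersolutions -/

/-- Classical supersolutions of some uniformly elliptic equation. -/
structure Super (lam Lam : ℝ) (U : Set (En n)) (u : En n → ℝ) : Prop where
  cd : ∀ x ∈ U, ContDiffAt ℝ 2 u x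
  eqn : ∀ x ∈ U, ∃ A : Fin n → Fin n → ℝ, EllMat lam Lam A ∧
    ∑ i, ∑ j, A i j * pd2 u i j x ≤ 0

lemma Super.contOn {lam Lam : ℝ} {U : Set (En n)} {u : En n → ℝ} (h : Super lam Lam U u) :
    ContinuousOn u U := fun x hx => (h.cd x hx).continuousAt.continuousWithinAt

/-- If the Hessian of `u` dominates `N` then a trace inequality holds. -/
lemma trace_touch {lam Lam : ℝ} {A : Fin n → Fin n → ℝ} (hA : EllMat lam Lam A)
    {u : En n → ℝ} {x : En n} (hu : ContDiffAt ℝ 2 u x) (N : Fin n → Fin n → ℝ)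
    (hN : ∀ i j, N i j = N j i)
    (h : ∀ ξ : En n, ∑ i, ∑ j, N i j * ξ i * ξ j ≤ Hs u x ξ ξ) :
    lam * ∑ i, (pd2 u i i x - N i i) ≤ ∑ i, ∑ j, A i j * (pd2 u i j x - N i j) ∧
    ∀ i j, |pd2 u i j x - N i j| ≤ ∑ k, (pd2 u k k x - N k k) := by
  have hs : ∀ i j, pd2 u i j x - N i j = pd2 u j i x - N j i := fun i j => by
    rw [pd2_symm hu i j, hN i j]
  have hp : ∀ ξ : Fin n → ℝ, 0 ≤ ∑ i, ∑ j, (pd2 u i j x - N i j) * ξ i * ξ j := fun ξ => by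
    have := h (WithLp.toLp 2 ξ)
    rw [Hs_eq hu] at this
    simp only at this
    simp only [sub_mul, Finset.sum_sub_distrib]
    linarith
  exact ⟨trace_ge hA _ hs hp, entry_le_trace _ hs hp⟩

lemma norm_line (x z ξ : En n) (t : ℝ) :
    ‖x + t • ξ - z‖ ^ 2 = ‖x - z‖ ^ 2 + 2 * t * (∑ i, (x - z) i * ξ i) + t ^ 2 * ∑ i, ξ i ^ 2 := by
  simp only [EuclideanSpace.real_norm_sq_eq, Finset.mul_sum, ← Finset.sum_add_distrib]
  refine Finset.sum_congr rfl fun i _ => ?_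
  simp
  ring

lemma line_tendsto (x ξ : En n) : Tendsto (fun t : ℝ => x + t • ξ) (𝓝 0) (𝓝 x) := by
  have : Continuous (fun t : ℝ => x + t • ξ) := by fun_prop
  simpa using this.tendsto 0

/-- Hopf-type barrier: spreading positivity from a small ball. -/
lemma barrier (n : ℕ) (lam Lam : ℝ) (hn : 2 ≤ n) (hlam : 0 < lam) (hLam : lam ≤ Lam) :
    ∃ c : ℝ, 0 < c ∧ c ≤ 1 ∧ ∀ (U : Set (En n)) (u : En n → ℝ) (z : En n) (r : ℝ), 0 < r →
      Super lam Lam U u → closedBall z (4 * r) ⊆ U → (∀ x ∈ closedBall z (4 * r), 0 ≤ u x) →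
      (∀ x ∈ closedBall z (r / 8), 1 / 2 ≤ u x) → ∀ x ∈ closedBall z (3 * r), c ≤ u x := by
  have hn0 : (0 : ℝ) < n := by exact_mod_cast (by omega : 0 < n)
  have hLam0 : 0 < Lam := hlam.trans_le hLam
  obtain ⟨Q, hQ⟩ : ∃ Q, Q = 32 * n * Lam / lam := ⟨_, rfl⟩
  have hQ0 : 0 < Q := by rw [hQ]; positivity
  have hQl : Q * lam = 32 * n * Lam := by rw [hQ]; field_simp
  refine ⟨(Real.exp (-(9 * Q)) - Real.exp (-(16 * Q))) / 2, ?_, ?_, ?_⟩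
  · have : Real.exp (-(16 * Q)) < Real.exp (-(9 * Q)) := Real.exp_lt_exp.2 (by linarith)
    linarith
  · have : Real.exp (-(9 * Q)) ≤ 1 := Real.exp_le_one_iff.2 (by linarith)
    linarith [Real.exp_pos (-(16 * Q))]
  intro U u z r hr hu hU hpos hlow
  obtain ⟨q, hq⟩ : ∃ q, q = Q / r ^ 2 := ⟨_, rfl⟩
  have hq0 : 0 < q := by rw [hq]; positivity
  have hqr : q * r ^ 2 = Q := by rw [hq]; field_simp
  have hcont : ContinuousOn
      (fun x => u x - (Real.exp (-(q * ‖x - z‖ ^ 2)) - Real.exp (-(16 * Q))) / 2)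
      (closedBall z (4 * r)) := by
    refine (hu.contOn.mono hU).sub ?_
    fun_prop
  obtain ⟨x, hx, hmin⟩ := (isCompact_closedBall z (4 * r)).exists_isMinOn
    ⟨z, by simp; positivity⟩ hcont
  have key : 0 ≤ u x - (Real.exp (-(q * ‖x - z‖ ^ 2)) - Real.exp (-(16 * Q))) / 2 := by
    by_contra hneg
    push Not at hneg
    have hx8 : r / 8 < ‖x - z‖ := by
      by_contra hle
      push Not at hle
      have h1 := hlow x (by rw [mem_closedBall, dist_eq_norm]; exact hle)
      have h2 : Real.exp (-(q * ‖x - z‖ ^ 2)) ≤ 1 := Real.exp_le_one_iff.2 (by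
        have : 0 ≤ q * ‖x - z‖ ^ 2 := by positivity
        linarith)
      linarith [Real.exp_pos (-(16 * Q))]
    have hx4 : ‖x - z‖ < 4 * r := by
      by_contra hle
      push Not at hle
      have h1 := hpos x hx
      have h2 : Real.exp (-(q * ‖x - z‖ ^ 2)) ≤ Real.exp (-(16 * Q)) := by
        refine Real.exp_le_exp.2 ?_
        have : (4 * r) ^ 2 ≤ ‖x - z‖ ^ 2 := by gcongr
        nlinarith
      linarith
    have hloc : IsLocalMin
        (fun x => u x - (Real.exp (-(q * ‖x - z‖ ^ 2)) - Real.exp (-(16 * Q))) / 2) x :=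
      hmin.isLocalMin (closedBall_mem_nhds_of_mem (by
        rw [mem_ball, dist_eq_norm]; exact hx4))
    have hxU := hU hx
    have hcd := hu.cd x hxU
    obtain ⟨A, hA, hAe⟩ := hu.eqn x hxU
    obtain ⟨E, hE⟩ : ∃ E, E = Real.exp (-(q * ‖x - z‖ ^ 2)) := ⟨_, rfl⟩
    have hE0 : 0 < E := by rw [hE]; exact Real.exp_pos _
    have htouch : ∀ ξ : En n,
        E / 2 * (4 * q ^ 2 * (∑ i, (x - z) i * ξ i) ^ 2 - 2 * q * ∑ i, ξ i ^ 2)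
          ≤ Hs u x ξ ξ := by
      intro ξ
      obtain ⟨b, hb⟩ : ∃ b, b = ∑ i, (x - z) i * ξ i := ⟨_, rfl⟩
      obtain ⟨d, hd⟩ : ∃ d, d = ∑ i, ξ i ^ 2 := ⟨_, rfl⟩
      obtain ⟨s, hs⟩ : ∃ s, s = ‖x - z‖ ^ 2 := ⟨_, rfl⟩
      have hin : ∀ t : ℝ, HasDerivAt (fun t : ℝ => -(q * (s + 2 * t * b + t ^ 2 * d)))
          (-(q * (2 * b + 2 * t * d))) t := fun t => by
        have h1 : HasDerivAt (fun t : ℝ => s + 2 * t * b + t ^ 2 * d)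
            (2 * b + 2 * t * d) t := by
          have := ((((hasDerivAt_id t).const_mul 2).mul_const b).const_add s).add
            (((hasDerivAt_id t).pow 2).mul_const d)
          refine this.congr_deriv ?_
          simp
        exact (h1.const_mul q).neg
      refine (touch_line hcd ξ
        (φ := fun t => (Real.exp (-(q * (s + 2 * t * b + t ^ 2 * d))) - Real.exp (-(16 * Q))) / 2)
        (φ' := fun t => Real.exp (-(q * (s + 2 * t * b + t ^ 2 * d))) *
          (-(q * (2 * b + 2 * t * d))) / 2)
        (fun t => (((hin t).exp).sub_const _).div_const 2) ?_ ?_).2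
      · have h2 : HasDerivAt (fun t : ℝ => -(q * (2 * b + 2 * t * d))) (-(q * (2 * d))) 0 := by
          have := ((((((hasDerivAt_id (0 : ℝ)).const_mul 2).mul_const d).const_add
            (2 * b))).const_mul q).neg
          refine this.congr_deriv ?_
          simp
        refine ((((hin 0).exp).mul h2).div_const 2).congr_deriv ?_
        rw [← hb, ← hd, hE, ← hs]
        simp
        ring
      · have hcomp := (line_tendsto x ξ).eventually hloc
        have : ∀ t : ℝ, u (x + t • ξ) - (Real.exp (-(q * (s + 2 * t * b + t ^ 2 * d)))
            - Real.exp (-(16 * Q))) / 2 = u (x + t • ξ) -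
            (Real.exp (-(q * ‖x + t • ξ - z‖ ^ 2)) - Real.exp (-(16 * Q))) / 2 := fun t => by
          rw [norm_line, ← hb, ← hd, ← hs]
        change ∀ᶠ t in 𝓝 (0 : ℝ), _
        filter_upwards [hcomp] with t ht
        simp only [this]
        simpa using ht
    have hform : ∀ ξ : En n, ∑ i, ∑ j, (E / 2 * (4 * q ^ 2 * ((x - z) i * (x - z) j)
        - 2 * q * if i = j then 1 else 0)) * ξ i * ξ j =
        E / 2 * (4 * q ^ 2 * (∑ i, (x - z) i * ξ i) ^ 2 - 2 * q * ∑ i, ξ i ^ 2) := by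
      intro ξ
      rw [pow_two (∑ i, (x - z) i * ξ i), Finset.sum_mul_sum, mul_sub, Finset.mul_sum,
        Finset.mul_sum, Finset.mul_sum, Finset.mul_sum, ← Finset.sum_sub_distrib]
      refine Finset.sum_congr rfl fun i _ => ?_
      rw [Finset.mul_sum, Finset.mul_sum]
      have : E / 2 * (2 * q * ξ i ^ 2) =
          ∑ j, E / 2 * (2 * q * if i = j then 1 else 0) * ξ i * ξ j := by
        rw [Finset.sum_eq_single i]
        · simp; ring
        · intro j _ hj; simp [hj.symm]
        · simp
      rw [this, ← Finset.sum_sub_distrib]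
      refine Finset.sum_congr rfl fun j _ => ?_
      ring
    obtain ⟨h1, h2⟩ := trace_touch hA hcd (fun i j => E / 2 * (4 * q ^ 2 * ((x - z) i * (x - z) j)
        - 2 * q * if i = j then 1 else 0))
      (fun i j => by simp only [eq_comm (a := i), mul_comm ((x - z) i)])
      (fun ξ => (hform ξ).trans_le (htouch ξ))
    have i0 : Fin n := ⟨0, by omega⟩
    have h3 := mul_nonneg hlam.le ((abs_nonneg _).trans (h2 i0 i0))
    have h4 := h3.trans h1
    simp only [mul_sub, Finset.sum_sub_distrib] at h4
    have h5 : ∑ i, ∑ j, A i j * (E / 2 * (4 * q ^ 2 * ((x - z) i * (x - z) j))) =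
        E / 2 * (4 * q ^ 2) * ∑ i, ∑ j, A i j * (x - z) i * (x - z) j := by
      simp only [Finset.mul_sum]
      refine Finset.sum_congr rfl fun i _ => Finset.sum_congr rfl fun j _ => by ring
    have h6 : ∑ i, ∑ j, A i j * (E / 2 * (2 * q * if i = j then (1 : ℝ) else 0)) =
        E / 2 * (2 * q) * ∑ i, A i i := by
      simp only [Finset.mul_sum]
      refine Finset.sum_congr rfl fun i _ => ?_
      rw [Finset.sum_eq_single i]
      · simp; ring
      · intro j _ hj; simp [hj.symm]
      · simp
    rw [h5, h6] at h4
    have h7 := (hA (fun i => (x - z) i)).1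
    rw [← EuclideanSpace.real_norm_sq_eq] at h7
    have h8 := hA.diag_le
    have h9 : n * Lam < 2 * q * (lam * ‖x - z‖ ^ 2) := by
      have : (r / 8) ^ 2 < ‖x - z‖ ^ 2 := by gcongr
      have h10 : 2 * q * (lam * (r / 8) ^ 2) = n * Lam := by
        linear_combination (lam / 32) * hqr + hQl / 32
      rw [← h10]
      gcongr
    have h11 : E * q * (n * Lam) < E * q * (2 * q * (lam * ‖x - z‖ ^ 2)) := by gcongr
    have h12 : E * q * (∑ i, A i i) ≤ E * q * (n * Lam) := by gcongr
    have h13 : 2 * E * q ^ 2 * (lam * ‖x - z‖ ^ 2) ≤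
      2 * E * q ^ 2 * (∑ i, ∑ j, A i j * (x - z) i * (x - z) j) := by gcongr
    nlinarith
  intro y hy
  have hy4 : y ∈ closedBall z (4 * r) := closedBall_subset_closedBall (by linarith) hy
  have h1 := hmin hy4
  simp only [mem_ofPred_eq] at h1
  have h2 : Real.exp (-(9 * Q)) ≤ Real.exp (-(q * ‖y - z‖ ^ 2)) := by
    refine Real.exp_le_exp.2 ?_
    rw [mem_closedBall, dist_eq_norm] at hy
    have : ‖y - z‖ ^ 2 ≤ (3 * r) ^ 2 := by gcongr
    nlinarith
  linarith

/-! ### The measure estimate (sliding paraboloids) -/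

/-- Riesz map. -/
def Lr (n : ℕ) : (En n →L[ℝ] ℝ) →L[ℝ] En n :=
  ∑ i, (ContinuousLinearMap.apply ℝ ℝ (EuclideanSpace.single i (1 : ℝ) : En n)).smulRight
    (EuclideanSpace.single i (1 : ℝ) : En n)

lemma Lr_apply (f : En n →L[ℝ] ℝ) (i : Fin n) : Lr n f i = f (EuclideanSpace.single i 1) := by
  simp [Lr, _root_.sum_apply, Pi.single_apply]

/-- The map sending a contact point to the vertex. -/
def Phi (u : En n → ℝ) (b : ℝ) (x : En n) : En n := x + b⁻¹ • Lr n (fderiv ℝ u x)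

def dPhi (u : En n → ℝ) (b : ℝ) (x : En n) : En n →L[ℝ] En n :=
  ContinuousLinearMap.id ℝ _ + b⁻¹ • (Lr n).comp (Hs u x)

lemma hasFDerivAt_Phi {u : En n → ℝ} {x : En n} (hu : ContDiffAt ℝ 2 u x) (b : ℝ) :
    HasFDerivAt (Phi u b) (dPhi u b x) x := by
  have h := (fderiv_diffAt hu).hasFDerivAt
  have h2 := ((Lr n).hasFDerivAt.comp x h).const_smul b⁻¹
  exact (hasFDerivAt_id x).add h2

lemma dPhi_entry {u : En n → ℝ} {x : En n} (hu : ContDiffAt ℝ 2 u x) (b : ℝ) (i j : Fin n) :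
    dPhi u b x (EuclideanSpace.single j 1) i = (if i = j then 1 else 0) + b⁻¹ * pd2 u i j x := by
  rw [pd2_eq hu]
  simp [dPhi, Lr_apply]

lemma continuousAt_det {u : En n → ℝ} {x : En n} (hu : ContDiffAt ℝ 2 u x) (b : ℝ) :
    ContinuousAt (fun x => (dPhi u b x).det) x := by
  have h1 : ContinuousAt (Hs u) x :=
    ((hu.fderiv_right (m := 1) (by norm_num)).fderiv_right (m := 0) (by norm_num)).continuousAt
  have h2 : ContinuousAt (dPhi u b) x := by
    unfold dPhi
    have h3 : ContinuousAt (fun x => (Lr n).comp (Hs u x)) x := continuousAt_const.clm_comp h1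
    have h4 : ContinuousAt (fun x => b⁻¹ • (Lr n).comp (Hs u x)) x := h3.const_smul b⁻¹
    exact continuousAt_const.add h4
  exact ContinuousLinearMap.continuous_det.continuousAt.comp h2

lemma det_bound {u : En n → ℝ} {x : En n} (hu : ContDiffAt ℝ 2 u x) (b : ℝ) (κ : ℝ)
    (h : ∀ i j, |(if i = j then (1 : ℝ) else 0) + b⁻¹ * pd2 u i j x| ≤ κ) :
    |(dPhi u b x).det| ≤ n.factorial * κ ^ n := by
  have h1 : (dPhi u b x).det = (LinearMap.toMatrix (EuclideanSpace.basisFun (Fin n) ℝ).toBasis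
      (EuclideanSpace.basisFun (Fin n) ℝ).toBasis (dPhi u b x : En n →ₗ[ℝ] En n)).det := by
    rw [LinearMap.det_toMatrix]
  rw [h1]
  have := Matrix.det_le (abv := AbsoluteValue.abs) (x := κ)
    (A := LinearMap.toMatrix (EuclideanSpace.basisFun (Fin n) ℝ).toBasis
      (EuclideanSpace.basisFun (Fin n) ℝ).toBasis (dPhi u b x : En n →ₗ[ℝ] En n)) (by
      intro i j
      have e : LinearMap.toMatrix (EuclideanSpace.basisFun (Fin n) ℝ).toBasis
        (EuclideanSpace.basisFun (Fin n) ℝ).toBasis (dPhi u b x : En n →ₗ[ℝ] En n) i j =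
          dPhi u b x (EuclideanSpace.single j 1) i := by
        simp [LinearMap.toMatrix_apply]
      rw [e, dPhi_entry hu]
      exact h i j)
  simpa using this

/-- Properties of a contact point with a paraboloid of opening `b` and vertex `y`. -/
lemma contact {lam Lam : ℝ} (hlam : 0 < lam) {U : Set (En n)} {u : En n → ℝ}
    (hu : Super lam Lam U u) {x y : En n} (hx : x ∈ U) {b : ℝ} (hb : 0 < b)
    (hmin : IsLocalMin (fun x => u x + b / 2 * ‖x - y‖ ^ 2) x) :
    Phi u b x = y ∧ |(dPhi u b x).det| ≤ n.factorial * (n * Lam / lam) ^ n := by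
  have hcd := hu.cd x hx
  obtain ⟨A, hA, hAe⟩ := hu.eqn x hx
  have htouch : ∀ ξ : En n, fderiv ℝ u x ξ = -(b * ∑ i, (x - y) i * ξ i) ∧
      -(b * ∑ i, ξ i ^ 2) ≤ Hs u x ξ ξ := by
    intro ξ
    obtain ⟨e, he⟩ : ∃ e, e = ∑ i, (x - y) i * ξ i := ⟨_, rfl⟩
    obtain ⟨d, hd⟩ : ∃ d, d = ∑ i, ξ i ^ 2 := ⟨_, rfl⟩
    obtain ⟨s, hs⟩ : ∃ s, s = ‖x - y‖ ^ 2 := ⟨_, rfl⟩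
    have h := touch_line hcd ξ (q := -(b * d))
      (φ := fun t => -(b / 2 * (s + 2 * t * e + t ^ 2 * d)))
      (φ' := fun t => -(b / 2 * (2 * e + 2 * t * d))) ?_ ?_ ?_
    · rw [← he, ← hd]
      refine ⟨h.1.trans ?_, h.2⟩
      simp; ring
    · intro t
      have h1 : HasDerivAt (fun t : ℝ => s + 2 * t * e + t ^ 2 * d)
          (2 * e + 2 * t * d) t := by
        have := ((((hasDerivAt_id t).const_mul 2).mul_const e).const_add s).add
          (((hasDerivAt_id t).pow 2).mul_const d)
        refine this.congr_deriv ?_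
        simp
      exact (h1.const_mul (b / 2)).neg
    · have := ((((((hasDerivAt_id (0 : ℝ)).const_mul 2).mul_const d).const_add
            (2 * e))).const_mul (b / 2)).neg
      refine this.congr_deriv ?_
      simp; ring
    · have hcomp := (line_tendsto x ξ).eventually hmin
      have : ∀ t : ℝ, u (x + t • ξ) - -(b / 2 * (s + 2 * t * e + t ^ 2 * d)) =
          u (x + t • ξ) + b / 2 * ‖x + t • ξ - y‖ ^ 2 := fun t => by
        rw [norm_line, ← he, ← hd, ← hs]; ring
      change ∀ᶠ t in 𝓝 (0 : ℝ), _
      filter_upwards [hcomp] with t ht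
      simp only [this]
      simpa using ht
  constructor
  · ext i
    have h1 := (htouch (EuclideanSpace.single i 1)).1
    simp at h1
    simp [Phi, Lr_apply, h1]
    field_simp
    ring
  · obtain ⟨h1, h2⟩ := trace_touch hA hcd (fun i j => -(b * if i = j then 1 else 0))
      (fun i j => by simp only [eq_comm (a := i)])
      (fun ξ => by
        refine le_trans (le_of_eq ?_) (htouch ξ).2
        rw [Finset.mul_sum, ← Finset.sum_neg_distrib]
        refine Finset.sum_congr rfl fun i _ => ?_
        rw [Finset.sum_eq_single i]
        · simp; ring
        · intro j _ hj; simp [hj.symm]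
        · simp)
    have h3 : ∑ i, ∑ j, A i j * (pd2 u i j x - -(b * if i = j then 1 else 0)) =
        ∑ i, ∑ j, A i j * pd2 u i j x + b * ∑ i, A i i := by
      rw [Finset.mul_sum, ← Finset.sum_add_distrib]
      refine Finset.sum_congr rfl fun i _ => ?_
      simp [mul_add, Finset.sum_add_distrib]
      ring
    rw [h3] at h1
    have h4 : b * ∑ i, A i i ≤ b * (n * Lam) := by gcongr; exact hA.diag_le
    refine det_bound hcd b _ fun i j => ?_
    have h5 := h2 i j
    obtain ⟨T, hT⟩ : ∃ T, T = ∑ k, (pd2 u k k x - -(b * if k = k then 1 else 0)) := ⟨_, rfl⟩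
    rw [← hT] at h1 h5
    have h6 : T ≤ b * (n * Lam / lam) := by
      rw [mul_div_assoc', le_div_iff₀ hlam]; linarith
    have h7 : (if i = j then (1 : ℝ) else 0) + b⁻¹ * pd2 u i j x =
        b⁻¹ * (pd2 u i j x - -(b * if i = j then 1 else 0)) := by
      field_simp; ring
    rw [h7, abs_mul, abs_of_pos (inv_pos.2 hb), inv_mul_le_iff₀ hb]
    linarith

lemma measure_est (n : ℕ) (lam Lam : ℝ) (hn : 2 ≤ n) (hlam : 0 < lam) (hLam : lam ≤ Lam) :
    ∃ δ : ℝ, 0 < δ ∧ δ < 1 ∧ ∀ (U : Set (En n)) (u : En n → ℝ) (z : En n) (r : ℝ), 0 < r →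
      Super lam Lam U u → closedBall z r ⊆ U → (∀ x ∈ closedBall z r, 0 ≤ u x) →
      (∃ x ∈ closedBall z (r / 8), u x < 1 / 2) →
      ENNReal.ofReal δ * volume (closedBall z r) ≤ volume {x ∈ closedBall z r | u x < 1} := by
  have hn0 : (0 : ℝ) < n := by exact_mod_cast (by omega : 0 < n)
  have hLam0 : 0 < Lam := hlam.trans_le hLam
  obtain ⟨C, hC⟩ : ∃ C : ℝ, C = n.factorial * (n * Lam / lam) ^ n + 1 := ⟨_, rfl⟩
  have hC1 : 1 ≤ C := by
    have : 0 ≤ n.factorial * (n * Lam / lam) ^ n := by positivity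
    linarith
  have hC0 : 0 < C := by linarith
  refine ⟨(1 / 8) ^ n / C, by positivity, ?_, ?_⟩
  · rw [div_lt_one hC0]
    refine lt_of_lt_of_le ?_ hC1
    exact pow_lt_one₀ (by norm_num) (by norm_num) (by omega)
  intro U u z r hr hu hU hpos ⟨x0, hx0, hux0⟩
  obtain ⟨b, hb⟩ : ∃ b, b = 16 / r ^ 2 := ⟨_, rfl⟩
  have hb0 : 0 < b := by rw [hb]; positivity
  have hbr : b * r ^ 2 = 16 := by rw [hb]; field_simp
  obtain ⟨S, hS⟩ : ∃ S, S = {x | x ∈ ball z r ∧ u x < 1 ∧ |(dPhi u b x).det| < C} := ⟨_, rfl⟩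
  have hSU : ∀ x ∈ S, x ∈ U := fun x hx => by
    rw [hS] at hx
    exact hU (ball_subset_closedBall hx.1)
  have hSo : IsOpen S := by
    rw [isOpen_iff_mem_nhds]
    intro x hx
    have hcd := hu.cd x (hSU x hx)
    rw [hS] at hx ⊢
    have h1 := isOpen_ball.mem_nhds hx.1
    have h2 := hcd.continuousAt.eventually (gt_mem_nhds hx.2.1)
    have h3 := (continuousAt_det hcd b).abs.eventually (gt_mem_nhds hx.2.2)
    filter_upwards [h1, h2, h3] with y a b c using ⟨a, b, c⟩
  have himg : ball z (r / 8) ⊆ Phi u b '' S := by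
    intro y hy
    have hcont : ContinuousOn (fun x => u x + b / 2 * ‖x - y‖ ^ 2) (closedBall z r) := by
      refine (hu.contOn.mono hU).add ?_
      fun_prop
    obtain ⟨x, hx, hmin⟩ := (isCompact_closedBall z r).exists_isMinOn
      ⟨z, by simp; positivity⟩ hcont
    have hx0' : x0 ∈ closedBall z r := closedBall_subset_closedBall (by linarith) hx0
    have h1 := hmin hx0'
    simp only [mem_ofPred_eq] at h1
    rw [mem_ball, dist_eq_norm] at hy
    rw [mem_closedBall, dist_eq_norm] at hx0
    have h2 : ‖x0 - y‖ ≤ r / 4 := by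
      have : x0 - y = (x0 - z) - (y - z) := by abel
      rw [this]
      refine (norm_sub_le _ _).trans ?_
      linarith
    have h3 : b / 2 * ‖x0 - y‖ ^ 2 ≤ b / 2 * (r / 4) ^ 2 := by gcongr
    have h4 : b / 2 * (r / 4) ^ 2 = 1 / 2 := by linear_combination hbr / 32
    have h5 : u x + b / 2 * ‖x - y‖ ^ 2 < 1 := by linarith
    have h6 := hpos x hx
    have h7 : ‖x - z‖ < r := by
      by_contra hle
      push Not at hle
      have h8 : 7 * r / 8 ≤ ‖x - y‖ := by
        have : x - z = (x - y) + (y - z) := by abel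
        rw [this] at hle
        have := norm_add_le (x - y) (y - z)
        linarith
      have h9 : b / 2 * (7 * r / 8) ^ 2 ≤ b / 2 * ‖x - y‖ ^ 2 := by gcongr
      have h10 : b / 2 * (7 * r / 8) ^ 2 = 49 / 8 := by linear_combination hbr * 49 / 128
      linarith
    have hxb : x ∈ ball z r := by rw [mem_ball, dist_eq_norm]; exact h7
    have hloc := hmin.isLocalMin (closedBall_mem_nhds_of_mem hxb)
    obtain ⟨h11, h12⟩ := contact hlam hu (hU hx) hb0 hloc
    refine ⟨x, ?_, h11⟩
    rw [hS]
    refine ⟨hxb, ?_, by rw [hC]; linarith⟩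
    have : 0 ≤ b / 2 * ‖x - y‖ ^ 2 := by positivity
    linarith
  have hv1 : volume (ball z (r / 8)) ≤ ENNReal.ofReal C * volume {x ∈ closedBall z r | u x < 1} := by
    calc volume (ball z (r / 8)) ≤ volume (Phi u b '' S) := measure_mono himg
      _ ≤ ∫⁻ x in S, ENNReal.ofReal |(dPhi u b x).det| :=
        addHaar_image_le_lintegral_abs_det_fderiv volume hSo.measurableSet
          fun x hx => (hasFDerivAt_Phi (hu.cd x (hSU x hx)) b).hasFDerivWithinAt
      _ ≤ ∫⁻ x in S, ENNReal.ofReal C := by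
        refine setLIntegral_mono measurable_const fun x hx => ?_
        rw [hS] at hx
        exact ENNReal.ofReal_le_ofReal hx.2.2.le
      _ = ENNReal.ofReal C * volume S := by simp
      _ ≤ _ := by
        gcongr
        rw [hS]
        intro x hx
        exact ⟨ball_subset_closedBall hx.1, hx.2.1⟩
  have hv2 : volume (ball z (r / 8)) = ENNReal.ofReal ((1 / 8) ^ n) * volume (closedBall z r) := by
    rw [Measure.addHaar_ball_of_pos _ _ (by positivity), Measure.addHaar_closedBall _ _ hr.le,
      ← mul_assoc, ← ENNReal.ofReal_mul (by positivity)]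
    congr 2
    rw [finrank_euclideanSpace_fin, ← mul_pow]
    congr 1
    ring
  rw [div_eq_inv_mul, ENNReal.ofReal_mul (by positivity), mul_assoc, ← hv2]
  calc ENNReal.ofReal C⁻¹ * volume (ball z (r / 8))
      ≤ ENNReal.ofReal C⁻¹ * (ENNReal.ofReal C * volume {x ∈ closedBall z r | u x < 1}) := by gcongr
    _ = _ := by
      rw [← mul_assoc, ← ENNReal.ofReal_mul (by positivity), inv_mul_cancel₀ hC0.ne']
      simp

/-! ### Growth lemma -/

lemma pd2_affine (u : En n → ℝ) (s k : ℝ) (i j : Fin n) (x : En n) :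
    pd2 (fun x => s * u x + k) i j x = s * pd2 u i j x := by
  unfold pd2
  simp only [fderiv_add_const]
  have : (fun y => fderiv ℝ (fun x => s * u x) y (EuclideanSpace.single i (1 : ℝ))) =
      fun y => s * fderiv ℝ u y (EuclideanSpace.single i (1 : ℝ)) := by
    funext y
    exact DFunLike.congr_fun (congrFun (fderiv_const_smul_field (𝕜 := ℝ) (f := u) s) y) _
  rw [this]
  exact DFunLike.congr_fun (congrFun (fderiv_const_smul_field (𝕜 := ℝ)
    (f := fun y => fderiv ℝ u y (EuclideanSpace.single i (1 : ℝ))) s) x) _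

lemma Super.scale {lam Lam : ℝ} {U : Set (En n)} {u : En n → ℝ} (h : Super lam Lam U u)
    {s : ℝ} (hs : 0 ≤ s) : Super lam Lam U (fun x => s * u x) := by
  constructor
  · intro x hx
    exact contDiffAt_const.mul (h.cd x hx)
  · intro x hx
    obtain ⟨A, hA, hAe⟩ := h.eqn x hx
    refine ⟨A, hA, ?_⟩
    have : ∀ i j, pd2 (fun x => s * u x) i j x = s * pd2 u i j x := fun i j => by
      simpa using pd2_affine u s 0 i j x
    simp only [this]
    have : ∑ i, ∑ j, A i j * (s * pd2 u i j x) = s * ∑ i, ∑ j, A i j * pd2 u i j x := by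
      simp only [Finset.mul_sum]
      exact Finset.sum_congr rfl fun i _ => Finset.sum_congr rfl fun j _ => by ring
    rw [this]
    exact mul_nonpos_of_nonneg_of_nonpos hs hAe

lemma meas_level {u : En n → ℝ} {z : En n} {r t : ℝ} (hu : ContinuousOn u (closedBall z r)) :
    MeasurableSet {x ∈ closedBall z r | t ≤ u x} :=
  (hu.preimage_isClosed_of_isClosed isClosed_closedBall isClosed_Ici).measurableSet

lemma growth (n : ℕ) (lam Lam : ℝ) (hn : 2 ≤ n) (hlam : 0 < lam) (hLam : lam ≤ Lam) :
    ∃ δ c : ℝ, 0 < δ ∧ δ < 1 ∧ 0 < c ∧ c ≤ 1 ∧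
    ∀ (U : Set (En n)) (u : En n → ℝ) (z : En n) (r t : ℝ), 0 < r → 0 < t →
      Super lam Lam U u → closedBall z (4 * r) ⊆ U → (∀ x ∈ closedBall z (4 * r), 0 ≤ u x) →
      ENNReal.ofReal (1 - δ) * volume (closedBall z r) < volume {x ∈ closedBall z r | t ≤ u x} →
      ∀ x ∈ closedBall z (3 * r), c * t ≤ u x := by
  obtain ⟨δ, hδ0, hδ1, hδ⟩ := measure_est n lam Lam hn hlam hLam
  obtain ⟨c, hc0, hc1, hc⟩ := barrier n lam Lam hn hlam hLam
  refine ⟨δ, c, hδ0, hδ1, hc0, hc1, ?_⟩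
  intro U u z r t hr ht hu hU hpos hvol x hx
  have hw := hu.scale (inv_pos.2 ht).le
  have hsub : closedBall z r ⊆ closedBall z (4 * r) := closedBall_subset_closedBall (by linarith)
  have hwpos : ∀ x ∈ closedBall z (4 * r), 0 ≤ t⁻¹ * u x := fun x hx =>
    mul_nonneg (inv_pos.2 ht).le (hpos x hx)
  have key : ∀ x ∈ closedBall z (r / 8), 1 / 2 ≤ t⁻¹ * u x := by
    by_contra hcon
    push Not at hcon
    have h1 := hδ U _ z r hr hw (hsub.trans hU) (fun x hx => hwpos x (hsub hx)) hcon
    have hset : {x ∈ closedBall z r | t⁻¹ * u x < 1} =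
        closedBall z r \ {x ∈ closedBall z r | t ≤ u x} := by
      ext y
      have : t⁻¹ * u y < 1 ↔ ¬ t ≤ u y := by
        rw [inv_mul_lt_iff₀ ht, mul_one, not_le]
      simp only [mem_ofPred_eq, Set.mem_sdiff, this]
      tauto
    rw [hset] at h1
    have h2 := measure_inter_add_sdiff (μ := volume) (closedBall z r)
      (meas_level (t := t) (hu.contOn.mono (hsub.trans hU)))
    have h3 : closedBall z r ∩ {x ∈ closedBall z r | t ≤ u x} =
        {x ∈ closedBall z r | t ≤ u x} := inter_eq_right.2 fun y hy => hy.1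
    rw [h3] at h2
    have hfin : volume (closedBall z r) ≠ ∞ := measure_closedBall_lt_top.ne
    have h4 := ENNReal.add_lt_add_of_lt_of_le (ENNReal.mul_ne_top ENNReal.ofReal_ne_top hfin)
      hvol h1
    rw [h2, ← add_mul, ← ENNReal.ofReal_add (by linarith) hδ0.le] at h4
    simp at h4
  have := hc U _ z r hr hw hU hwpos key x hx
  rw [mul_comm, ← le_inv_mul_iff₀ ht]
  exact this

/-! ### Growing ink spots -/

lemma ink_spots (δ : ℝ) (hδ0 : 0 < δ) (hδ1 : δ < 1) (z₀ : En n) (r₀ : ℝ) (hr₀ : 0 < r₀)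
    (E F : Set (En n)) (hEB : E ⊆ closedBall z₀ r₀) (hEm : MeasurableSet E) (hEF : E ⊆ F)
    (hvol : volume E ≤ ENNReal.ofReal (1 - δ) * volume (closedBall z₀ r₀))
    (h : ∀ (z : En n) (r : ℝ), 0 < r → dist z z₀ + r ≤ r₀ →
      ENNReal.ofReal (1 - δ) * volume (closedBall z r) < volume (E ∩ closedBall z r) →
      closedBall z (3 * r) ∩ closedBall z₀ r₀ ⊆ F) :
    volume E + ENNReal.ofReal (δ / 5 ^ n) * volume E ≤ volume F := by
  have hstep : ∀ᵐ x ∂(volume.restrict E), ∃ (c : En n) (ρ : ℝ), 0 < ρ ∧ ρ ≤ r₀ ∧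
      x ∈ closedBall c ρ ∧ closedBall c ρ ⊆ F ∧
      volume (closedBall c ρ ∩ E) ≤ ENNReal.ofReal (1 - δ) * volume (closedBall c ρ) := by
    filter_upwards [IsUnifLocDoublingMeasure.ae_tendsto_measure_inter_div volume E 1,
      ae_restrict_mem hEm] with x hx hxE
    have hxB : ‖x - z₀‖ ≤ r₀ := by
      have := hEB hxE
      rwa [mem_closedBall, dist_eq_norm] at this
    obtain ⟨w, hw⟩ : ∃ w : ℕ → En n, w = fun k => z₀ + (1 - (1 / 2 : ℝ) ^ k) • (x - z₀) := ⟨_, rfl⟩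
    obtain ⟨R, hR⟩ : ∃ R : ℕ → ℝ, R = fun k => (1 / 2 : ℝ) ^ k * r₀ := ⟨_, rfl⟩
    have hp0 : ∀ k : ℕ, (0 : ℝ) < (1 / 2) ^ k := fun k => by positivity
    have hp1 : ∀ k : ℕ, (1 / 2 : ℝ) ^ k ≤ 1 := fun k => pow_le_one₀ (by norm_num) (by norm_num)
    have hR0 : ∀ k, 0 < R k := fun k => by rw [hR]; exact mul_pos (hp0 k) hr₀
    have hRlim : Tendsto R atTop (𝓝[>] 0) := by
      refine tendsto_nhdsWithin_iff.2 ⟨?_, Eventually.of_forall hR0⟩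
      rw [hR]
      simpa using (tendsto_pow_atTop_nhds_zero_of_lt_one (r := (1 / 2 : ℝ)) (by norm_num)
        (by norm_num)).mul_const r₀
    have hxw : ∀ k, dist x (w k) ≤ R k := fun k => by
      have : x - w k = (1 / 2 : ℝ) ^ k • (x - z₀) := by
        rw [hw]; module
      rw [dist_eq_norm, this, norm_smul, Real.norm_of_nonneg (hp0 k).le, hR]
      exact mul_le_mul_of_nonneg_left hxB (hp0 k).le
    have hwz : ∀ k, dist (w k) z₀ + R k ≤ r₀ := fun k => by
      have : w k - z₀ = (1 - (1 / 2 : ℝ) ^ k) • (x - z₀) := by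
        rw [hw]; module
      have h0 : 0 ≤ 1 - (1 / 2 : ℝ) ^ k := by linarith [hp1 k]
      rw [dist_eq_norm, this, norm_smul, Real.norm_of_nonneg h0, hR]
      have := mul_le_mul_of_nonneg_left hxB h0
      linarith
    have hlim := hx w R hRlim (Eventually.of_forall fun k => by simpa using hxw k)
    have hlt : ENNReal.ofReal (1 - δ) < 1 := by
      rw [← ENNReal.ofReal_one]
      exact (ENNReal.ofReal_lt_ofReal_iff (by norm_num)).2 (by linarith)
    have hex : ∃ k, ENNReal.ofReal (1 - δ) * volume (closedBall (w k) (R k)) <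
        volume (E ∩ closedBall (w k) (R k)) := by
      obtain ⟨k, hk⟩ := (hlim.eventually (lt_mem_nhds hlt)).exists
      refine ⟨k, ?_⟩
      have hpos : volume (closedBall (w k) (R k)) ≠ 0 :=
        (measure_closedBall_pos volume _ (hR0 k)).ne'
      exact (ENNReal.lt_div_iff_mul_lt (Or.inl hpos)
        (Or.inl measure_closedBall_lt_top.ne)).1 hk
    classical
    obtain ⟨k, hk, hkmin⟩ : ∃ k, (ENNReal.ofReal (1 - δ) * volume (closedBall (w k) (R k)) <
        volume (E ∩ closedBall (w k) (R k))) ∧ ∀ j < k,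
        ¬ (ENNReal.ofReal (1 - δ) * volume (closedBall (w j) (R j)) <
        volume (E ∩ closedBall (w j) (R j))) :=
      ⟨Nat.find hex, Nat.find_spec hex, fun j hj => Nat.find_min hex hj⟩
    have hk0 : k ≠ 0 := by
      rintro rfl
      have e1 : w 0 = z₀ := by rw [hw]; simp
      have e2 : R 0 = r₀ := by rw [hR]; simp
      rw [e1, e2, inter_eq_left.2 hEB] at hk
      exact absurd hvol (not_le.2 hk)
    obtain ⟨j, rfl⟩ := Nat.exists_eq_succ_of_ne_zero hk0
    have hRj : R j = 2 * R (j + 1) := by rw [hR]; simp only [pow_succ]; ring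
    refine ⟨w j, R j, hR0 j, ?_, ?_, ?_, ?_⟩
    · linarith [hwz j, dist_nonneg (x := w j) (y := z₀)]
    · exact hxw j
    · refine Subset.trans ?_ (h _ _ (hR0 (j + 1)) (hwz (j + 1)) hk)
      refine subset_inter ?_ ?_
      · refine closedBall_subset_closedBall' ?_
        have : w j - w (j + 1) = (-(1 / 2 : ℝ) ^ (j + 1)) • (x - z₀) := by
          rw [hw]; simp only [pow_succ]; module
        have h2 : dist (w j) (w (j + 1)) ≤ R (j + 1) := by
          rw [dist_eq_norm, this, norm_smul, norm_neg, Real.norm_of_nonneg (hp0 _).le, hR]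
          exact mul_le_mul_of_nonneg_left hxB (hp0 _).le
        linarith
      · exact closedBall_subset_closedBall' (by linarith [hwz j])
    · rw [inter_comm]
      exact not_lt.1 (hkmin j (Nat.lt_succ_self j))
  obtain ⟨G, hG⟩ : ∃ G : Set (En n), G = {x | x ∈ E ∧ ∃ (c : En n) (ρ : ℝ), 0 < ρ ∧ ρ ≤ r₀ ∧
      x ∈ closedBall c ρ ∧ closedBall c ρ ⊆ F ∧
      volume (closedBall c ρ ∩ E) ≤ ENNReal.ofReal (1 - δ) * volume (closedBall c ρ)} := ⟨_, rfl⟩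
  have hEG : volume E ≤ volume G := by
    refine measure_mono_ae ?_
    rw [ae_restrict_iff' hEm] at hstep
    filter_upwards [hstep] with x hx hxE
    rw [hG]
    exact ⟨hxE, hx hxE⟩
  have hGex : ∀ x : En n, ∃ (c : En n) (ρ : ℝ), x ∈ G → (0 < ρ ∧ ρ ≤ r₀ ∧
      x ∈ closedBall c ρ ∧ closedBall c ρ ⊆ F ∧
      volume (closedBall c ρ ∩ E) ≤ ENNReal.ofReal (1 - δ) * volume (closedBall c ρ)) := by
    intro x
    by_cases hx : x ∈ G
    · have hx' := hx
      rw [hG] at hx'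
      obtain ⟨_, c, ρ, hh⟩ := hx'
      exact ⟨c, ρ, fun _ => hh⟩
    · exact ⟨0, 0, fun hh => absurd hh hx⟩
  choose c ρ hcρ using hGex
  obtain ⟨v, hvG, hdisj, hcov⟩ := Vitali.exists_disjoint_subfamily_covering_enlargement_closedBall
    G c ρ r₀ (fun a ha => (hcρ a ha).2.1) 5 (by norm_num)
  have hvc : v.Countable := hdisj.countable_of_nonempty_interior fun a ha =>
    ⟨c a, ball_subset_interior_closedBall (mem_ball_self (hcρ a (hvG ha)).1)⟩
  have hG5 : volume G ≤ ∑' a : v, ENNReal.ofReal (5 ^ n) * volume (closedBall (c a) (ρ a)) := by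
    have : G ⊆ ⋃ a ∈ v, closedBall (c a) (5 * ρ a) := by
      intro x hx
      obtain ⟨b, hb, hsub⟩ := hcov x hx
      exact mem_biUnion hb (hsub (hcρ x hx).2.2.1)
    refine (measure_mono this).trans ((measure_biUnion_le volume hvc _).trans (le_of_eq ?_))
    refine tsum_congr fun a => ?_
    have hρ := (hcρ a (hvG a.2)).1
    rw [Measure.addHaar_closedBall _ _ (by positivity), Measure.addHaar_closedBall _ _ hρ.le,
      ← mul_assoc, ← ENNReal.ofReal_mul (by positivity), finrank_euclideanSpace_fin, mul_pow]
  have hδB : ∀ a : v, ENNReal.ofReal δ * volume (closedBall (c a) (ρ a)) ≤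
      volume (closedBall (c a) (ρ a) \ E) := by
    intro a
    have h1 := (hcρ a (hvG a.2)).2.2.2.2
    have h2 := measure_inter_add_sdiff (μ := volume) (closedBall (c a) (ρ a)) hEm
    have hfin : ENNReal.ofReal (1 - δ) * volume (closedBall (c a) (ρ a)) ≠ ∞ :=
      ENNReal.mul_ne_top ENNReal.ofReal_ne_top measure_closedBall_lt_top.ne
    have h3 : ENNReal.ofReal (1 - δ) * volume (closedBall (c a) (ρ a)) +
        ENNReal.ofReal δ * volume (closedBall (c a) (ρ a)) = volume (closedBall (c a) (ρ a)) := by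
      rw [← add_mul, ← ENNReal.ofReal_add (by linarith) hδ0.le]; simp
    refine (ENNReal.add_le_add_iff_left hfin).1 ?_
    rw [h3]
    conv_lhs => rw [← h2]
    gcongr
  have hsum : ∑' a : v, volume (closedBall (c a) (ρ a) \ E) ≤ volume (F \ E) := by
    rw [← measure_biUnion hvc (f := fun a => closedBall (c a) (ρ a) \ E)
      (hdisj.mono fun a => sdiff_subset) (fun a _ => isClosed_closedBall.measurableSet.diff hEm)]
    refine measure_mono (iUnion₂_subset fun a ha => ?_)
    exact sdiff_subset_sdiff_left (hcρ a (hvG ha)).2.2.2.1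
  have hfinal : ENNReal.ofReal (δ / 5 ^ n) * volume E ≤ volume (F \ E) := by
    calc ENNReal.ofReal (δ / 5 ^ n) * volume E
        ≤ ENNReal.ofReal (δ / 5 ^ n) *
          ∑' a : v, ENNReal.ofReal (5 ^ n) * volume (closedBall (c a) (ρ a)) := by
          gcongr; exact hEG.trans hG5
      _ = ∑' a : v, ENNReal.ofReal δ * volume (closedBall (c a) (ρ a)) := by
          rw [← ENNReal.tsum_mul_left]
          refine tsum_congr fun a => ?_
          rw [← mul_assoc, ← ENNReal.ofReal_mul (by positivity)]
          congr 2
          field_simp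
      _ ≤ ∑' a : v, volume (closedBall (c a) (ρ a) \ E) := ENNReal.tsum_le_tsum hδB
      _ ≤ _ := hsum
  have h2 := measure_inter_add_sdiff (μ := volume) F hEm
  rw [inter_eq_right.2 hEF] at h2
  rw [← h2]
  gcongr

/-! ### Oscillation decay -/

lemma half_lemma (n : ℕ) (lam Lam : ℝ) (hn : 2 ≤ n) (hlam : 0 < lam) (hLam : lam ≤ Lam) :
    ∃ θ : ℝ, 0 < θ ∧ θ ≤ 1 ∧ ∀ (U : Set (En n)) (u : En n → ℝ) (z : En n) (r : ℝ), 0 < r →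
      Super lam Lam U u → closedBall z (4 * r) ⊆ U → (∀ x ∈ closedBall z (4 * r), 0 ≤ u x) →
      ENNReal.ofReal (1 / 2) * volume (closedBall z r) ≤ volume {x ∈ closedBall z r | 1 ≤ u x} →
      ∀ x ∈ closedBall z r, θ ≤ u x := by
  obtain ⟨δ, c, hδ0, hδ1, hc0, hc1, hgr⟩ := growth n lam Lam hn hlam hLam
  obtain ⟨η, hη⟩ : ∃ η, η = δ / 5 ^ n := ⟨_, rfl⟩
  have hη0 : 0 < η := by rw [hη]; positivity
  obtain ⟨N, hN⟩ := exists_nat_gt (1 / η)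
  have hN' : 1 < N * η := by rwa [div_lt_iff₀ hη0] at hN
  refine ⟨c ^ N, by positivity, pow_le_one₀ hc0.le hc1, ?_⟩
  intro U u z r hr hu hU hpos hhalf
  have hsub : closedBall z r ⊆ closedBall z (4 * r) := closedBall_subset_closedBall (by linarith)
  have hVfin : volume (closedBall z r) ≠ ∞ := measure_closedBall_lt_top.ne
  have hVpos : volume (closedBall z r) ≠ 0 := (measure_closedBall_pos volume _ hr).ne'
  have key : ∀ k : ℕ, (∀ x ∈ closedBall z r, c ^ k ≤ u x) ∨
      ENNReal.ofReal ((1 + k * η) / 2) * volume (closedBall z r) ≤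
        volume {x ∈ closedBall z r | c ^ k ≤ u x} := by
    intro k
    induction k with
    | zero => right; simpa using hhalf
    | succ k ih =>
      rcases ih with ih | ih
      · left
        intro x hx
        refine le_trans ?_ (ih x hx)
        rw [pow_succ]
        exact mul_le_of_le_one_right (by positivity) hc1
      · by_cases hbig : ENNReal.ofReal (1 - δ) * volume (closedBall z r) <
          volume {x ∈ closedBall z r | c ^ k ≤ u x}
        · left
          intro x hx
          rw [pow_succ']
          exact hgr U u z r (c ^ k) hr (by positivity) hu hU hpos hbig x
            (closedBall_subset_closedBall (by linarith) hx)
        · right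
          push Not at hbig
          have hink := ink_spots δ hδ0 hδ1 z r hr {x ∈ closedBall z r | c ^ k ≤ u x}
            {x ∈ closedBall z r | c ^ (k + 1) ≤ u x} (fun x hx => hx.1)
            (meas_level (hu.contOn.mono (hsub.trans hU)))
            (fun x hx => ⟨hx.1, le_trans (by
              rw [pow_succ]
              exact mul_le_of_le_one_right (by positivity) hc1) hx.2⟩) hbig ?_
          · refine le_trans ?_ hink
            rw [← hη]
            have h2 : ENNReal.ofReal (1 / 2) * volume (closedBall z r) ≤
                volume {x ∈ closedBall z r | c ^ k ≤ u x} := by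
              refine le_trans ?_ ih
              gcongr
              have : 0 ≤ k * η := by positivity
              linarith
            have h3 : ENNReal.ofReal ((1 + (k + 1 : ℕ) * η) / 2) * volume (closedBall z r) =
                ENNReal.ofReal ((1 + k * η) / 2) * volume (closedBall z r) +
                ENNReal.ofReal η * (ENNReal.ofReal (1 / 2) * volume (closedBall z r)) := by
              rw [← mul_assoc, ← ENNReal.ofReal_mul hη0.le, ← add_mul,
                ← ENNReal.ofReal_add (by positivity) (by positivity)]
              congr 2
              push_cast
              ring
            rw [h3]
            gcongr
          · intro y s hs hdist hvol x hx
            refine ⟨hx.2, ?_⟩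
            rw [pow_succ']
            have hs4 : closedBall y (4 * s) ⊆ closedBall z (4 * r) := by
              refine closedBall_subset_closedBall' ?_
              linarith [dist_nonneg (x := y) (y := z)]
            refine hgr U u y s (c ^ k) hs (by positivity) hu (hs4.trans hU)
              (fun x hx => hpos x (hs4 hx)) (hvol.trans_le (measure_mono ?_)) x hx.1
            intro w hw
            exact ⟨hw.2, hw.1.2⟩
  rcases key N with h | h
  · exact h
  · exfalso
    have h1 : volume {x ∈ closedBall z r | c ^ N ≤ u x} ≤ volume (closedBall z r) :=
      measure_mono fun x hx => hx.1
    have h2 := h.trans h1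
    have h3 : ENNReal.ofReal 1 < ENNReal.ofReal ((1 + N * η) / 2) :=
      (ENNReal.ofReal_lt_ofReal_iff (by linarith)).2 (by linarith)
    rw [ENNReal.ofReal_one] at h3
    have h4 := ENNReal.mul_lt_mul_left hVpos hVfin h3
    rw [one_mul] at h4
    exact absurd h2 (not_le.2 h4)

lemma osc_step {lam Lam θ : ℝ} (hθ0 : 0 < θ)
    (hθ : ∀ (U : Set (En n)) (u : En n → ℝ) (z : En n) (r : ℝ), 0 < r →
      Super lam Lam U u → closedBall z (4 * r) ⊆ U → (∀ x ∈ closedBall z (4 * r), 0 ≤ u x) →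
      ENNReal.ofReal (1 / 2) * volume (closedBall z r) ≤ volume {x ∈ closedBall z r | 1 ≤ u x} →
      ∀ x ∈ closedBall z r, θ ≤ u x)
    {U : Set (En n)} {v : En n → ℝ} (hv : ∀ s k : ℝ, Super lam Lam U (fun x => s * v x + k))
    {z : En n} {r m D : ℝ} (hr : 0 < r) (hD : 0 ≤ D) (hU : closedBall z (4 * r) ⊆ U)
    (hb : ∀ x ∈ closedBall z (4 * r), m ≤ v x ∧ v x ≤ m + D) :
    ∃ m', ∀ x ∈ closedBall z r, m' ≤ v x ∧ v x ≤ m' + (1 - θ / 2) * D := by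
  have hsub : closedBall z r ⊆ closedBall z (4 * r) := closedBall_subset_closedBall (by linarith)
  rcases hD.eq_or_lt with rfl | hD
  · exact ⟨m, fun x hx => by simpa using hb x (hsub hx)⟩
  have e1 : ∀ x, 2 / D * v x + -(2 / D * m) = 2 / D * (v x - m) := fun x => by ring
  have e2 : ∀ x, -(2 / D) * v x + 2 / D * (m + D) = 2 / D * (m + D - v x) := fun x => by ring
  have hD2 : 0 < 2 / D := by positivity
  have hsum : volume (closedBall z r) ≤
      volume {x ∈ closedBall z r | 1 ≤ 2 / D * v x + -(2 / D * m)} +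
      volume {x ∈ closedBall z r | 1 ≤ -(2 / D) * v x + 2 / D * (m + D)} := by
    refine le_trans (measure_mono ?_) (measure_union_le _ _)
    intro x hx
    by_cases h : 1 ≤ 2 / D * v x + -(2 / D * m)
    · exact Or.inl ⟨hx, h⟩
    · refine Or.inr ⟨hx, ?_⟩
      have : 2 / D * D = 2 := by field_simp
      linarith
  have hhalf : ENNReal.ofReal (1 / 2) * volume (closedBall z r) ≤
      volume {x ∈ closedBall z r | 1 ≤ 2 / D * v x + -(2 / D * m)} ∨
      ENNReal.ofReal (1 / 2) * volume (closedBall z r) ≤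
      volume {x ∈ closedBall z r | 1 ≤ -(2 / D) * v x + 2 / D * (m + D)} := by
    by_contra hcon
    push Not at hcon
    have h1 := ENNReal.add_lt_add hcon.1 hcon.2
    rw [← add_mul, ← ENNReal.ofReal_add (by norm_num) (by norm_num)] at h1
    norm_num at h1
    norm_num at hsum
    exact absurd hsum (not_le.2 h1)
  rcases hhalf with h | h
  · have := hθ U _ z r hr (hv _ _) hU (fun x hx => by
      rw [e1]; exact mul_nonneg hD2.le (by linarith [(hb x hx).1])) h
    refine ⟨m + θ / 2 * D, fun x hx => ?_⟩
    have h1 := this x hx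
    have h2 := hb x (hsub hx)
    rw [e1, div_mul_eq_mul_div, le_div_iff₀ hD] at h1
    constructor <;> linarith
  · have := hθ U _ z r hr (hv _ _) hU (fun x hx => by
      rw [e2]; exact mul_nonneg hD2.le (by linarith [(hb x hx).2])) h
    refine ⟨m, fun x hx => ?_⟩
    have h1 := this x hx
    have h2 := hb x (hsub hx)
    rw [e2, div_mul_eq_mul_div, le_div_iff₀ hD] at h1
    constructor <;> linarith

lemma osc_iter {lam Lam θ : ℝ} (hθ0 : 0 < θ) (hθ1 : θ ≤ 1)
    (hθ : ∀ (U : Set (En n)) (u : En n → ℝ) (z : En n) (r : ℝ), 0 < r →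
      Super lam Lam U u → closedBall z (4 * r) ⊆ U → (∀ x ∈ closedBall z (4 * r), 0 ≤ u x) →
      ENNReal.ofReal (1 / 2) * volume (closedBall z r) ≤ volume {x ∈ closedBall z r | 1 ≤ u x} →
      ∀ x ∈ closedBall z r, θ ≤ u x)
    {U : Set (En n)} {v : En n → ℝ} (hv : ∀ s k : ℝ, Super lam Lam U (fun x => s * v x + k))
    {z : En n} {ρ K : ℝ} (hρ : 0 < ρ) (hK : 0 ≤ K) (hU : closedBall z ρ ⊆ U)
    (hb : ∀ x ∈ closedBall z ρ, 0 ≤ v x ∧ v x ≤ K) (k : ℕ) :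
    ∃ m, ∀ x ∈ closedBall z ((1 / 4) ^ k * ρ), m ≤ v x ∧ v x ≤ m + (1 - θ / 2) ^ k * K := by
  induction k with
  | zero => exact ⟨0, by simpa using hb⟩
  | succ k ih =>
    obtain ⟨m, hm⟩ := ih
    have e : 4 * ((1 / 4 : ℝ) ^ (k + 1) * ρ) = (1 / 4) ^ k * ρ := by rw [pow_succ]; ring
    have hg : 0 ≤ (1 - θ / 2) ^ k := pow_nonneg (by linarith) k
    have hle : (1 / 4 : ℝ) ^ k * ρ ≤ ρ :=
      mul_le_of_le_one_left hρ.le (pow_le_one₀ (by norm_num) (by norm_num))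
    obtain ⟨m', hm'⟩ := osc_step hθ0 hθ hv (z := z) (r := (1 / 4) ^ (k + 1) * ρ) (m := m)
      (D := (1 - θ / 2) ^ k * K) (by positivity) (by positivity)
      (by rw [e]; exact (closedBall_subset_closedBall hle).trans hU) (by rw [e]; exact hm)
    refine ⟨m', fun x hx => ?_⟩
    have := hm' x hx
    rw [pow_succ (1 - θ / 2), mul_comm ((1 - θ / 2) ^ k), mul_assoc]
    exact this

end KS

/-- **Krylov–Safonov `C^α` estimate.** There are `α ∈ (0,1)` and `C > 0` depending only on
`n, λ, Λ` such that any bounded nonnegative `C²` solution of `Σ a_{ij} ∂_{ij} v = 0` in `B₁`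
satisfies `|v(x) − v(y)| ≤ C ‖v‖_{L^∞(B₁)} |x − y|^α` for all `x, y ∈ B_{1/2}`. -/
theorem krylov_safonov_Calpha
    (n : ℕ) (hn : 2 ≤ n) (lam Lam : ℝ) (hlam : 0 < lam) (hLam : lam ≤ Lam) :
    ∃ α C : ℝ, α ∈ Set.Ioo (0 : ℝ) 1 ∧ 0 < C ∧
      ∀ (a : Fin n → Fin n → En n → ℝ) (v : En n → ℝ) (K : ℝ),
        UnifEllipticOn (ball (0 : En n) 1) lam Lam a →
        ContDiffOn ℝ 2 v (ball (0 : En n) 1) →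
        (∀ x ∈ ball (0 : En n) 1, 0 ≤ v x) →
        (∀ x ∈ ball (0 : En n) 1, ∑ i, ∑ j, a i j x * pd2 v i j x = 0) →
        (∀ x ∈ ball (0 : En n) 1, |v x| ≤ K) →
        ∀ x ∈ ball (0 : En n) (1 / 2), ∀ y ∈ ball (0 : En n) (1 / 2),
          |v x - v y| ≤ C * K * ‖x - y‖ ^ α := by
  obtain ⟨θ, hθ0, hθ1, hθ⟩ := half_lemma n lam Lam hn hlam hLam
  obtain ⟨γ, hγ⟩ : ∃ γ, γ = 1 - θ / 2 := ⟨_, rfl⟩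
  have hγ0 : 1 / 2 ≤ γ := by linarith
  have hγ1 : γ < 1 := by linarith
  have hγp : 0 < γ := by linarith
  obtain ⟨α, hα⟩ : ∃ α, α = Real.logb (1 / 4) γ := ⟨_, rfl⟩
  have hαγ : (1 / 4 : ℝ) ^ α = γ := by
    rw [hα]; exact Real.rpow_logb (by norm_num) (by norm_num) hγp
  have hα0 : 0 < α := by
    rw [hα]; exact Real.logb_pos_of_base_lt_one (by norm_num) (by norm_num) hγp hγ1
  have hα1 : α < 1 := by
    by_contra hle
    push Not at hle
    have := Real.rpow_le_rpow_of_exponent_ge (x := (1 / 4 : ℝ)) (by norm_num) (by norm_num) hle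
    rw [hαγ, Real.rpow_one] at this
    linarith
  refine ⟨α, 16, ⟨hα0, hα1⟩, by norm_num, ?_⟩
  intro a v K hell hcd hpos heq hK x hx y hy
  have hK0 : 0 ≤ K := (abs_nonneg _).trans (hK 0 (by simp))
  have hcdA : ∀ x ∈ ball (0 : En n) 1, ContDiffAt ℝ 2 v x := fun x hx =>
    hcd.contDiffAt (isOpen_ball.mem_nhds hx)
  have hsup : ∀ s k : ℝ, Super lam Lam (ball (0 : En n) 1) (fun x => s * v x + k) := by
    intro s k
    constructor
    · intro x hx
      exact (contDiffAt_const.mul (hcdA x hx)).add contDiffAt_const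
    · intro x hx
      refine ⟨fun i j => a i j x, fun ξ => hell.2 x hx (WithLp.toLp 2 ξ), ?_⟩
      have : ∑ i, ∑ j, a i j x * (s * pd2 v i j x) = s * ∑ i, ∑ j, a i j x * pd2 v i j x := by
        simp only [Finset.mul_sum]
        exact Finset.sum_congr rfl fun i _ => Finset.sum_congr rfl fun j _ => by ring
      simp only [pd2_affine, this, heq x hx, mul_zero, le_refl]
  rcases eq_or_ne x y with rfl | hxy
  · simp [Real.zero_rpow hα0.ne']
  have hd : 0 < ‖x - y‖ := norm_pos_iff.2 (sub_ne_zero.2 hxy)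
  have hx1 : x ∈ ball (0 : En n) 1 := ball_subset_ball (by norm_num) hx
  have hy1 : y ∈ ball (0 : En n) 1 := ball_subset_ball (by norm_num) hy
  by_cases hd4 : 4 * ‖x - y‖ ≤ 1
  · obtain ⟨k, hk1, hk2⟩ := exists_nat_pow_near_of_lt_one (x := 4 * ‖x - y‖) (y := (1 / 4 : ℝ))
      (by positivity) hd4 (by norm_num) (by norm_num)
    have hsubU : closedBall x (1 / 4) ⊆ ball (0 : En n) 1 := by
      refine closedBall_subset_ball' ?_
      rw [mem_ball] at hx
      linarith
    obtain ⟨m, hm⟩ := osc_iter hθ0 hθ1 hθ hsup (z := x) (ρ := 1 / 4) (by norm_num) hK0 hsubU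
      (fun w hw => ⟨hpos w (hsubU hw), (le_abs_self _).trans (hK w (hsubU hw))⟩) k
    have h1 := hm x (mem_closedBall_self (by positivity))
    have h2 := hm y (by
      rw [mem_closedBall, dist_comm, dist_eq_norm]
      linarith)
    have h3 : |v x - v y| ≤ γ ^ k * K := by
      rw [abs_le, hγ]
      constructor <;> linarith
    have h4 : γ ^ k ≤ 16 * ‖x - y‖ ^ α := by
      have h5 : ((1 / 4 : ℝ) ^ k) ^ α ≤ (16 * ‖x - y‖) ^ α := by
        refine Real.rpow_le_rpow (by positivity) ?_ hα0.le
        rw [pow_succ] at hk1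
        linarith
      have h6 : ((1 / 4 : ℝ) ^ k) ^ α = γ ^ k := by
        rw [← hαγ, ← Real.rpow_natCast, ← Real.rpow_natCast, ← Real.rpow_mul (by norm_num),
          ← Real.rpow_mul (by norm_num), mul_comm]
      rw [h6, Real.mul_rpow (by norm_num) hd.le] at h5
      have h7 : (16 : ℝ) ^ α ≤ 16 := by
        have := Real.rpow_le_rpow_of_exponent_le (x := (16 : ℝ)) (by norm_num) hα1.le
        rwa [Real.rpow_one] at this
      refine h5.trans ?_
      gcongr
    calc |v x - v y| ≤ γ ^ k * K := h3
      _ ≤ 16 * ‖x - y‖ ^ α * K := by gcongr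
      _ = 16 * K * ‖x - y‖ ^ α := by ring
  · push Not at hd4
    have h3 : |v x - v y| ≤ K := by
      have h1 := hpos x hx1
      have h2 := hpos y hy1
      have h4 := (le_abs_self _).trans (hK x hx1)
      have h5 := (le_abs_self _).trans (hK y hy1)
      rw [abs_le]
      constructor <;> linarith
    have h4 : (1 / 4 : ℝ) ^ α ≤ ‖x - y‖ ^ α :=
      Real.rpow_le_rpow (by norm_num) (by linarith) hα0.le
    rw [hαγ] at h4
    have h5 : 1 * K ≤ 16 * ‖x - y‖ ^ α * K := by
      gcongr
      linarith
    linarith
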